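/- Let 𝒳, ℒ ⊆ ℝ^d be bounded symmetric convex sets with 0 in their interiors, with gauge norms ‖·‖_{𝒳^c} (of the dual set of 𝒳) and ‖·‖_ℒ. Suppose D > 0 is such that for every n ∈ ℕ, every x₀ ∈ ℝ^d and every predictable sequence x₁, …, x_n, with ε uniform on {−1,1}^n: E_ε‖x₀ + Σ_{i=1}^n ε_i x_i(ε)‖_{𝒳^c} ≤ D·(n+1)^{1/2}·max(‖x₀‖_ℒ, max_{1≤i≤n} max_ε ‖x_i(ε)‖_ℒ). Then there is a universal constant K (independent of d, 𝒳, ℒ, D, n) such that for every n, every x₀, and every predictable sequence x₁, …, x_n: E_ε‖x₀ + Σ_{i=1}^n ε_i x_i(ε)‖_{𝒳^c} ≤ K·D·max_ε (‖x₀‖_ℒ² + Σ_{i=1}^n ‖x_i(ε)‖_ℒ²)^{1/2}. -/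

import Mathlib

open RealInnerProductSpace

/-- The dual set `C^c = {x : ⟨x,y⟩ ≤ 1 for all y ∈ C}` of a set `C ⊆ ℝ^d`. -/
def dualSet {d : ℕ} (C : Set (EuclideanSpace ℝ (Fin d))) : Set (EuclideanSpace ℝ (Fin d)) :=
  {x | ∀ y ∈ C, ⟪x, y⟫ ≤ 1}

/-- The real sign `±1` associated to a boolean coordinate of a Rademacher vector. -/
def signv (b : Bool) : ℝ := if b then 1 else -1

/-!
Fix `r > 0` and let `V n v` be the largest mean of `p` that a predictable walk of `n` steps, each of
`q`-size at most `r`, can reach from `v`. Then `V n` is convex, and a convex function sees a single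
sign step `± y` as no larger than `m` independent sign steps `± 2 y / √m`: this is Jensen's
inequality together with Khinchin's bound `√m / 2 ≤ E|ε₁ + ⋯ + ε_m|`. Hence an arbitrary predictable
walk is dominated by a walk with steps of size at most `r`, in which the step `x_i` is replaced by
about `(2 q(x_i) / r)²` small ones. If `∑ q(x_i)² ≤ B²`, the choice `r = 2 B / √(n + 1)` uses at
most `2 n + 1` small steps, and the hypothesis on walks with bounded steps gives the bound
`D √(2 n + 2) r = 2 √2 D B`.
-/

open Set Filter Topology
open scoped BigOperators

section Convexity

theorem convexOn_ciSup {E ι : Type*} [AddCommGroup E] [Module ℝ E] [Nonempty ι] {s : Set E}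
    {f : ι → E → ℝ} (hf : ∀ i, ConvexOn ℝ s (f i))
    (hbdd : ∀ v ∈ s, BddAbove (range fun i => f i v)) :
    ConvexOn ℝ s fun v => ⨆ i, f i v := by
  refine ⟨(hf (Classical.arbitrary ι)).1, fun u hu w hw a b ha hb hab => ciSup_le fun i => ?_⟩
  refine ((hf i).2 hu hw ha hb hab).trans ?_
  gcongr
  exacts [le_ciSup (hbdd u hu) i, le_ciSup (hbdd w hw) i]

theorem ciSup_add_ciSup_le_of_forall {ι κ : Type*} [Nonempty ι] [Nonempty κ] {f : ι → ℝ} {g : κ → ℝ}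
    {a : ℝ} (h : ∀ i j, f i + g j ≤ a) : (⨆ i, f i) + ⨆ j, g j ≤ a := by
  refine le_sub_iff_add_le.1 (ciSup_le fun i => ?_)
  exact le_sub_comm.1 (ciSup_le fun j => le_sub_iff_add_le'.2 (h i j))

theorem convexOn_map_expect_le {ι : Type*} [Fintype ι] [Nonempty ι] {f : ℝ → ℝ}
    (hf : ConvexOn ℝ univ f) (X : ι → ℝ) : f (𝔼 i, X i) ≤ 𝔼 i, f (X i) := by
  have jensen := hf.map_sum_le (t := Finset.univ) (w := fun _ : ι => (Fintype.card ι : ℝ)⁻¹)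
    (p := X) (fun _ _ => by positivity) (by simp) fun _ _ => mem_univ _
  simpa only [Fintype.expect_eq_sum_div_card, div_eq_inv_mul, Finset.mul_sum, smul_eq_mul]
    using jensen

theorem convexOn_even_le_expect {ι : Type*} [Fintype ι] [Nonempty ι] {f : ℝ → ℝ}
    (hf : ConvexOn ℝ univ f) (heven : f.Even) {X : ι → ℝ} {c : ℝ} (hc : |c| ≤ 𝔼 i, |X i|) :
    f c ≤ 𝔼 i, f (X i) := by
  have map_abs (s : ℝ) : f |s| = f s := by
    rcases abs_choice s with h | h <;> rw [h]
    exact heven s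
  calc f c ≤ max (f (-𝔼 i, |X i|)) (f (𝔼 i, |X i|)) :=
        hf.le_max_of_mem_Icc (mem_univ _) (mem_univ _) (abs_le.1 hc)
    _ = f (𝔼 i, |X i|) := by rw [heven, max_self]
    _ ≤ 𝔼 i, f |X i| := convexOn_map_expect_le hf _
    _ = 𝔼 i, f (X i) := by simp only [map_abs]

end Convexity

section Walks

theorem sum_div_two_pow_eq_expect {n : ℕ} (F : (Fin n → Bool) → ℝ) :
    (∑ ε, F ε) / 2 ^ n = 𝔼 ε, F ε := by
  simp [Fintype.expect_eq_sum_div_card]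

theorem expect_sign_succ {n : ℕ} (F : (Fin (n + 1) → Bool) → ℝ) :
    𝔼 ε, F ε = (𝔼 ε, F (Fin.cons true ε) + 𝔼 ε, F (Fin.cons false ε)) / 2 := by
  have split : ∑ ε, F ε = ∑ ε, F (Fin.cons true ε) + ∑ ε, F (Fin.cons false ε) := by
    rw [← (Fin.consEquiv fun _ : Fin (n + 1) => Bool).sum_comp, Fintype.sum_prod_type,
      Fintype.sum_bool]
    rfl
  simp only [← sum_div_two_pow_eq_expect, split, pow_succ]
  ring

/-- The predictability condition of the theorem: the `i`-th step depends only on the signs that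
precede it. -/
def IsPredictable {E : Type*} {n : ℕ} (x : Fin n → (Fin n → Bool) → E) : Prop :=
  ∀ (i : Fin n) (ε ε' : Fin n → Bool), (∀ j : Fin n, j < i → ε j = ε' j) → x i ε = x i ε'

theorem IsPredictable.tail {E : Type*} {n : ℕ} {x : Fin (n + 1) → (Fin (n + 1) → Bool) → E}
    (hx : IsPredictable x) (b : Bool) :
    IsPredictable fun (i : Fin n) ε => x i.succ (Fin.cons b ε) := by
  refine fun i ε ε' h => hx _ _ _ fun j => ?_
  cases j using Fin.cases with
  | zero => simp
  | succ j => simpa using h j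

/-- The walk whose first step is `y` and which continues as `x b` once the first sign is `b`. -/
def branchWalk {E : Type*} {n : ℕ} (y : E) (x : Bool → Fin n → (Fin n → Bool) → E) :
    Fin (n + 1) → (Fin (n + 1) → Bool) → E :=
  Fin.cons (fun _ => y) fun i ε => x (ε 0) i (Fin.tail ε)

theorem isPredictable_branchWalk {E : Type*} {n : ℕ} {x : Bool → Fin n → (Fin n → Bool) → E}
    (hx : ∀ b, IsPredictable (x b)) (y : E) : IsPredictable (branchWalk y x) := by
  intro i ε ε' h
  cases i using Fin.cases with
  | zero => rfl
  | succ i =>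
    change x (ε 0) i _ = x (ε' 0) i _
    rw [h 0 i.succ_pos]
    exact hx _ i _ _ fun j hj => h j.succ (Fin.succ_lt_succ_iff.2 hj)

theorem IsPredictable.eq_branchWalk {E : Type*} {n : ℕ}
    {x : Fin (n + 1) → (Fin (n + 1) → Bool) → E} (hx : IsPredictable x) (ε₀ : Fin (n + 1) → Bool) :
    x = branchWalk (x 0 ε₀) fun b i ε => x i.succ (Fin.cons b ε) := by
  funext i ε
  cases i using Fin.cases with
  | zero => exact hx 0 ε ε₀ fun j hj => absurd hj j.not_lt_zero
  | succ i => exact congrArg (x i.succ) (Fin.cons_self_tail ε).symm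

variable {E : Type*} [AddCommGroup E] [Module ℝ E]

/-- The mean of `p` at the endpoint of the walk started at `v` whose `i`-th step is `± x i`. -/
noncomputable def walkMean (p : E → ℝ) {n : ℕ} (v : E) (x : Fin n → (Fin n → Bool) → E) : ℝ :=
  𝔼 ε, p (v + ∑ i, signv (ε i) • x i ε)

theorem walkMean_of_length_zero (p : E → ℝ) (v : E) (x : Fin 0 → (Fin 0 → Bool) → E) :
    walkMean p v x = p v := by
  simp [walkMean]

theorem walkMean_zero_steps (p : E → ℝ) (n : ℕ) (v : E) :
    walkMean p v (0 : Fin n → (Fin n → Bool) → E) = p v := by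
  simp [walkMean]

theorem walkMean_branchWalk (p : E → ℝ) {n : ℕ} (v y : E) (x : Bool → Fin n → (Fin n → Bool) → E) :
    walkMean p v (branchWalk y x)
      = (walkMean p (v + y) (x true) + walkMean p (v - y) (x false)) / 2 := by
  simp [walkMean, expect_sign_succ, branchWalk, Fin.sum_univ_succ, signv, add_assoc,
    sub_eq_add_neg]

theorem walkMean_le_add {p : E → ℝ} (hp : ∀ v w, p (v + w) ≤ p v + p w) {n : ℕ} (v : E)
    (x : Fin n → (Fin n → Bool) → E) : walkMean p v x ≤ p v + walkMean p 0 x := by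
  calc walkMean p v x ≤ 𝔼 ε, (p v + p (0 + ∑ i, signv (ε i) • x i ε)) :=
        Finset.expect_le_expect fun ε _ => by rw [zero_add]; exact hp _ _
    _ = p v + walkMean p 0 x := by rw [Finset.expect_add_distrib, Fintype.expect_const, walkMean]

theorem convexOn_walkMean {p : E → ℝ} (hp : ConvexOn ℝ univ p) {n : ℕ}
    (x : Fin n → (Fin n → Bool) → E) : ConvexOn ℝ univ fun v => walkMean p v x := by
  refine ⟨convex_univ, fun u _ w _ a b ha hb hab => ?_⟩
  simp only [walkMean, smul_eq_mul, Finset.mul_expect, ← Finset.expect_add_distrib]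
  exact Finset.expect_le_expect fun ε _ =>
    (hp.translate_left (∑ i, signv (ε i) • x i ε)).2 trivial trivial ha hb hab

end Walks

section Khinchin

variable {n : ℕ}

theorem walkMean_real_succ (p : ℝ → ℝ) (s : ℝ) (a : Fin (n + 1) → ℝ) :
    walkMean p s (fun i _ => a i) = (walkMean p (s + a 0) (fun i _ => a i.succ)
      + walkMean p (s - a 0) fun i _ => a i.succ) / 2 := by
  rw [← walkMean_branchWalk p s (a 0) fun _ i _ => a i.succ]
  congr 1
  exact IsPredictable.eq_branchWalk (fun _ _ _ _ => rfl) fun _ => true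

theorem walkMean_sq (s : ℝ) (a : Fin n → ℝ) :
    walkMean (· ^ 2) s (fun i _ => a i) = s ^ 2 + ∑ i, a i ^ 2 := by
  induction n generalizing s with
  | zero => simp [walkMean_of_length_zero]
  | succ n ih =>
    rw [walkMean_real_succ, ih, ih, Fin.sum_univ_succ]
    ring

theorem walkMean_pow_four_le (s : ℝ) (a : Fin n → ℝ) :
    walkMean (· ^ 4) s (fun i _ => a i)
      ≤ s ^ 4 + 6 * s ^ 2 * ∑ i, a i ^ 2 + 3 * (∑ i, a i ^ 2) ^ 2 := by
  induction n generalizing s with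
  | zero => simp [walkMean_of_length_zero]
  | succ n ih =>
    rw [walkMean_real_succ, Fin.sum_univ_succ]
    linarith [ih (s + a 0) fun i => a i.succ, ih (s - a 0) fun i => a i.succ,
      pow_nonneg (sq_nonneg (a 0)) 2]

theorem sq_sub_pow_four_div_six_le {u : ℝ} (hu : 0 ≤ u) : u ^ 2 - u ^ 4 / 6 ≤ u := by
  have cubic_nonneg : 0 ≤ 1 - u + u ^ 3 / 6 := by
    nlinarith [mul_nonneg (by linarith : 0 ≤ u + 3) (sq_nonneg (u - 7 / 5)), sq_nonneg (u - 7 / 5)]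
  linarith [mul_nonneg hu cubic_nonneg]

theorem sq_div_sub_pow_four_div_le_abs {w : ℝ} (hw : 0 < w) (s : ℝ) :
    s ^ 2 / w - s ^ 4 / (6 * w ^ 3) ≤ |s| := by
  calc s ^ 2 / w - s ^ 4 / (6 * w ^ 3) = w * ((|s| / w) ^ 2 - (|s| / w) ^ 4 / 6) := by
        rw [div_pow, div_pow, sq_abs, (by decide : Even 4).pow_abs]
        field_simp
    _ ≤ w * (|s| / w) := by gcongr; exact sq_sub_pow_four_div_six_le (by positivity)
    _ = |s| := mul_div_cancel₀ _ hw.ne'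

theorem half_sqrt_sum_sq_le_walkMean_abs (a : Fin n → ℝ) :
    √(∑ i, a i ^ 2) / 2 ≤ walkMean (|·|) 0 fun i _ => a i := by
  obtain ⟨w, hw⟩ : ∃ w, w = √(∑ i, a i ^ 2) := ⟨_, rfl⟩
  have sq_w : w ^ 2 = ∑ i, a i ^ 2 := by rw [hw, Real.sq_sqrt (by positivity)]
  rw [← hw]
  rcases (hw ▸ Real.sqrt_nonneg _ : 0 ≤ w).eq_or_lt with w_zero | w_pos
  · rw [← w_zero, zero_div]
    exact Finset.expect_nonneg fun _ _ => abs_nonneg _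
  have second_moment := walkMean_sq 0 a
  have fourth_moment := walkMean_pow_four_le 0 a
  rw [← sq_w] at second_moment fourth_moment
  calc w / 2 = w ^ 2 / w - 3 * (w ^ 2) ^ 2 / (6 * w ^ 3) := by field_simp; ring
    _ ≤ walkMean (· ^ 2) 0 (fun i _ => a i) / w
          - walkMean (· ^ 4) 0 (fun i _ => a i) / (6 * w ^ 3) := by
        gcongr <;> linarith
    _ = walkMean (fun s => s ^ 2 / w - s ^ 4 / (6 * w ^ 3)) 0 fun i _ => a i := by
        simp only [walkMean, Finset.expect_div, Finset.expect_sub_distrib]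
    _ ≤ walkMean (|·|) 0 fun i _ => a i :=
        Finset.expect_le_expect fun _ _ => sq_div_sub_pow_four_div_le_abs w_pos _

theorem walkMean_comp_neg (p : ℝ → ℝ) (a : Fin n → ℝ) :
    walkMean (fun s => p (-s)) 0 (fun i _ => a i) = walkMean p 0 fun i _ => a i := by
  refine Fintype.expect_equiv (Equiv.piCongrRight fun _ => Equiv.boolNot) _ _ fun ε => ?_
  have signv_not (b : Bool) : signv (!b) = -signv b := by cases b <;> simp [signv]
  simp [signv_not]

theorem convexOn_add_neg_le_walkMean {f : ℝ → ℝ} (hf : ConvexOn ℝ univ f) (a : Fin n → ℝ) :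
    (f (√(∑ i, a i ^ 2) / 2) + f (-(√(∑ i, a i ^ 2) / 2))) / 2
      ≤ walkMean f 0 fun i _ => a i := by
  have convexOn_symm : ConvexOn ℝ univ fun s => f s + f (-s) :=
    hf.add (hf.comp_linearMap (-LinearMap.id))
  have jensen := convexOn_even_le_expect convexOn_symm (fun s => by simp only [neg_neg, add_comm])
    ((abs_of_nonneg (by positivity)).trans_le (half_sqrt_sum_sq_le_walkMean_abs a))
  rw [Finset.expect_add_distrib] at jensen
  change _ ≤ walkMean f 0 (fun i _ => a i) + walkMean (fun s => f (-s)) 0 (fun i _ => a i) at jensen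
  rw [walkMean_comp_neg] at jensen
  linarith

end Khinchin

section BoundedWalks

variable {E : Type*} {q : E → ℝ} {r : ℝ}

/-- The predictable walks of length `n` all of whose steps have `q`-size at most `r`. -/
def boundedWalks (q : E → ℝ) (r : ℝ) (n : ℕ) : Set (Fin n → (Fin n → Bool) → E) :=
  {x | IsPredictable x ∧ ∀ i ε, q (x i ε) ≤ r}

theorem zero_mem_boundedWalks [Zero E] (hr : q 0 ≤ r) (n : ℕ) :
    (0 : Fin n → (Fin n → Bool) → E) ∈ boundedWalks q r n :=
  ⟨fun _ _ _ _ => rfl, fun _ _ => hr⟩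

theorem nonempty_boundedWalks [Zero E] (hr : q 0 ≤ r) (n : ℕ) : Nonempty (boundedWalks q r n) :=
  ⟨0, zero_mem_boundedWalks hr n⟩

theorem branchWalk_mem_boundedWalks {n : ℕ} {y : E} {x : Bool → Fin n → (Fin n → Bool) → E}
    (hy : q y ≤ r) (hx : ∀ b, x b ∈ boundedWalks q r n) :
    branchWalk y x ∈ boundedWalks q r (n + 1) := by
  refine ⟨isPredictable_branchWalk (fun b => (hx b).1) y, fun i ε => ?_⟩
  cases i using Fin.cases with
  | zero => exact hy
  | succ i => exact (hx (ε 0)).2 i (Fin.tail ε)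

end BoundedWalks

section Value

variable {E : Type*} [AddCommGroup E] [Module ℝ E] {p q : E → ℝ} {r : ℝ}

/-- The value function of the optimal control problem of maximising the mean of `p` over
`boundedWalks q r n` started at `v`. It is only meaningful where the set of means is bounded above;
elsewhere the supremum is the junk value `0`. -/
noncomputable def walkValue (p q : E → ℝ) (r : ℝ) (n : ℕ) (v : E) : ℝ :=
  ⨆ x : boundedWalks q r n, walkMean p v x.1

theorem walkValue_le (hr : q 0 ≤ r) {n : ℕ} {v : E} {c : ℝ}
    (h : ∀ x ∈ boundedWalks q r n, walkMean p v x ≤ c) : walkValue p q r n v ≤ c :=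
  have := nonempty_boundedWalks hr n
  ciSup_le fun x => h x.1 x.2

theorem le_walkValue (hr : q 0 ≤ r) {n : ℕ} {v : E}
    (hbdd : BddAbove (range fun x : boundedWalks q r n => walkMean p v x.1)) :
    p v ≤ walkValue p q r n v := by
  have hle : _ ≤ walkValue p q r n v := le_ciSup hbdd ⟨0, zero_mem_boundedWalks hr n⟩
  rwa [walkMean_zero_steps] at hle

theorem convexOn_walkValue (hr : q 0 ≤ r) {n : ℕ}
    (hbdd : ∀ v, BddAbove (range fun x : boundedWalks q r n => walkMean p v x.1))
    (hp : ConvexOn ℝ univ p) :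
    ConvexOn ℝ univ (walkValue p q r n) :=
  have := nonempty_boundedWalks hr n
  convexOn_ciSup (fun x : boundedWalks q r n => convexOn_walkMean hp x.1) fun v _ => hbdd v

theorem walkValue_add_sub_le_succ (hr : q 0 ≤ r) {n : ℕ} {v : E}
    (hbdd : BddAbove (range fun x : boundedWalks q r (n + 1) => walkMean p v x.1)) {y : E}
    (hy : q y ≤ r) :
    (walkValue p q r n (v + y) + walkValue p q r n (v - y)) / 2 ≤ walkValue p q r (n + 1) v := by
  have := nonempty_boundedWalks hr n
  rw [div_le_iff₀ two_pos]
  refine ciSup_add_ciSup_le_of_forall fun x z => ?_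
  have hbranch : branchWalk y (fun b => if b then x.1 else z.1) ∈ boundedWalks q r (n + 1) :=
    branchWalk_mem_boundedWalks hy (by simp [x.2, z.2])
  have hle : _ ≤ walkValue p q r (n + 1) v := le_ciSup hbdd ⟨_, hbranch⟩
  rw [walkMean_branchWalk, div_le_iff₀ two_pos] at hle
  simpa using hle

theorem walkMean_walkValue_le (hr : q 0 ≤ r)
    (hbdd : ∀ n v, BddAbove (range fun x : boundedWalks q r n => walkMean p v x.1))
    (n : ℕ) {m : ℕ} (v : E) {x : Fin m → (Fin m → Bool) → E}
    (hx : x ∈ boundedWalks q r m) :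
    walkMean (walkValue p q r n) v x ≤ walkValue p q r (n + m) v := by
  induction m generalizing v with
  | zero => rw [walkMean_of_length_zero, add_zero]
  | succ m ih =>
    rw [hx.1.eq_branchWalk fun _ => true, walkMean_branchWalk]
    have ih_tail (b : Bool) (u : E) := ih u ⟨hx.1.tail b, fun i ε => hx.2 i.succ (Fin.cons b ε)⟩
    refine le_trans ?_ (walkValue_add_sub_le_succ hr (hbdd (n + (m + 1)) v) (hx.2 0 fun _ => true))
    gcongr
    exacts [ih_tail true _, ih_tail false _]

theorem walkValue_add_sub_le_add (hr : q 0 ≤ r)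
    (hbdd : ∀ n v, BddAbove (range fun x : boundedWalks q r n => walkMean p v x.1))
    (hp : ConvexOn ℝ univ p) (hq : ∀ (t : ℝ) v, 0 ≤ t → q (t • v) = t * q v)
    (n : ℕ) {m : ℕ} (hm : 0 < m) (v : E) {y : E}
    (hy : q y ≤ r * √m / 2) :
    (walkValue p q r n (v + y) + walkValue p q r n (v - y)) / 2 ≤ walkValue p q r (n + m) v := by
  have sqrt_pos : 0 < √(m : ℝ) := by positivity
  set z := (2 / √m) • y with hz
  have smul_z : (√m / 2) • z = y := by
    rw [hz, smul_smul, div_mul_div_cancel₀ two_ne_zero, div_self sqrt_pos.ne', one_smul]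
  have q_z_le : q z ≤ r := by
    rw [hz, hq _ _ (by positivity), div_mul_eq_mul_div, div_le_iff₀ sqrt_pos]
    linarith
  have convexOn_line : ConvexOn ℝ univ fun s : ℝ => walkValue p q r n (v + s • z) :=
    ((convexOn_walkValue hr (hbdd n) hp).translate_right v).comp_linearMap
      (LinearMap.toSpanSingleton ℝ E z)
  calc (walkValue p q r n (v + y) + walkValue p q r n (v - y)) / 2
      ≤ walkMean (fun s : ℝ => walkValue p q r n (v + s • z)) 0 fun (_ : Fin m) _ => 1 := by
        simpa [neg_smul, smul_z, ← sub_eq_add_neg]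
          using convexOn_add_neg_le_walkMean convexOn_line fun _ : Fin m => 1
    _ = walkMean (walkValue p q r n) v fun (_ : Fin m) _ => z := by
        simp [walkMean, Finset.sum_smul]
    _ ≤ walkValue p q r (n + m) v :=
        walkMean_walkValue_le hr hbdd n v ⟨fun _ _ _ _ => rfl, fun _ _ => q_z_le⟩

theorem walkMean_le_walkValue (hr : q 0 ≤ r)
    (hbdd : ∀ n v, BddAbove (range fun x : boundedWalks q r n => walkMean p v x.1))
    (hp : ConvexOn ℝ univ p) (hq : ∀ (t : ℝ) v, 0 ≤ t → q (t • v) = t * q v)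
    {n : ℕ} (N : ℕ) (v : E) {x : Fin n → (Fin n → Bool) → E}
    (hx : IsPredictable x) {m : E → ℕ} (hm : ∀ y, 0 < m y) (hqm : ∀ y, q y ≤ r * √(m y) / 2)
    (hN : ∀ ε, ∑ i, m (x i ε) ≤ N) : walkMean p v x ≤ walkValue p q r N v := by
  induction n generalizing N v with
  | zero => rw [walkMean_of_length_zero]; exact le_walkValue hr (hbdd N v)
  | succ n ih =>
    set y := x 0 fun _ => true with hy
    have first_step (ε) : x 0 ε = y := hx 0 _ _ fun j hj => absurd hj j.not_lt_zero
    simp only [Fin.sum_univ_succ, first_step] at hN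
    obtain ⟨N', rfl⟩ : ∃ N', N = N' + m y :=
      Nat.exists_eq_add_of_le' (le_of_add_le_left (hN fun _ => true))
    rw [hx.eq_branchWalk fun _ => true, ← hy, walkMean_branchWalk]
    have ih_tail (b : Bool) (u : E) := ih N' u (hx.tail b) fun ε =>
      Nat.le_of_add_le_add_left ((hN (Fin.cons b ε)).trans_eq (add_comm _ _))
    refine le_trans ?_ (walkValue_add_sub_le_add hr hbdd hp hq N' (hm y) v (hqm y))
    gcongr
    exacts [ih_tail true _, ih_tail false _]

end Value

section SmallSteps

/-- The number of sign steps of size at most `r` that replace one sign step of size `t`. The extra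
`1` makes the number positive and lets `⌊·⌋₊` serve as an upper bound. -/
noncomputable def smallStepCount (r t : ℝ) : ℕ := ⌊(2 * t / r) ^ 2⌋₊ + 1

theorem le_mul_sqrt_smallStepCount {r : ℝ} (hr : 0 < r) (t : ℝ) :
    t ≤ r * √(smallStepCount r t) / 2 := by
  have sq_le : (2 * t / r) ^ 2 ≤ smallStepCount r t := by
    simpa [smallStepCount] using (Nat.lt_floor_add_one ((2 * t / r) ^ 2)).le
  have := Real.le_sqrt_of_sq_le sq_le
  rw [div_le_iff₀ hr] at this
  linarith

theorem sum_smallStepCount_le {n : ℕ} {t : Fin n → ℝ} {B : ℝ} (hB : 0 < B)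
    (ht : ∑ i, t i ^ 2 ≤ B ^ 2) :
    ∑ i, smallStepCount (2 * B / √(n + 1)) (t i) ≤ 2 * n + 1 := by
  have sq_div (s : ℝ) : (2 * s / (2 * B / √(n + 1))) ^ 2 = s ^ 2 * ((n + 1) / B ^ 2) := by
    have : √(n + 1 : ℝ) ^ 2 = n + 1 := Real.sq_sqrt (by positivity)
    field_simp
    rw [this]
  have cast_le : ∑ i, (smallStepCount (2 * B / √(n + 1)) (t i) : ℝ) ≤ 2 * n + 1 :=
    calc ∑ i, (smallStepCount (2 * B / √(n + 1)) (t i) : ℝ)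
        ≤ ∑ i, (t i ^ 2 * ((n + 1) / B ^ 2) + 1) := by
          simp only [smallStepCount, sq_div, Nat.cast_add, Nat.cast_one]
          gcongr
          exact Nat.floor_le (by positivity)
      _ = (∑ i, t i ^ 2) * ((n + 1) / B ^ 2) + n := by
          simp [Finset.sum_add_distrib, Finset.sum_mul]
      _ ≤ B ^ 2 * ((n + 1) / B ^ 2) + n := by gcongr
      _ = 2 * n + 1 := by field_simp; ring
  exact_mod_cast cast_le

end SmallSteps

section MartingaleType

variable {E : Type*} [AddCommGroup E] [Module ℝ E] {p q : E → ℝ} {D : ℝ}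

/-- The hypothesis of the theorem for functions `p`, `q` in place of the two gauges: walks with
bounded steps grow at most like the square root of their length. -/
def HasBoundedStepType (p q : E → ℝ) (D : ℝ) : Prop :=
  ∀ (n : ℕ) (x₀ : E) (x : Fin n → (Fin n → Bool) → E), IsPredictable x →
    walkMean p x₀ x ≤ D * √(n + 1) * max (q x₀) (⨆ i, ⨆ ε, q (x i ε))

theorem HasBoundedStepType.le_mul (h : HasBoundedStepType p q D) (hq : ∀ v, 0 ≤ q v) (v : E) :
    p v ≤ D * q v := by
  simpa [walkMean_of_length_zero, hq v] using h 0 v (fun _ _ => 0) fun _ _ _ _ => rfl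

theorem HasBoundedStepType.walkMean_le (h : HasBoundedStepType p q D) (hD : 0 ≤ D) {r : ℝ}
    (hr : 0 ≤ r) {n : ℕ} (v : E) {x : Fin n → (Fin n → Bool) → E} (hx : x ∈ boundedWalks q r n) :
    walkMean p v x ≤ D * √(n + 1) * max (q v) r := by
  refine (h n v x hx.1).trans ?_
  gcongr
  exact Real.iSup_le (fun i => Real.iSup_le (fun ε => hx.2 i ε) hr) hr

theorem HasBoundedStepType.walkMean_zero_le (h : HasBoundedStepType p q D)
    (hp : ConvexOn ℝ univ p) (hq_smul : ∀ (t : ℝ) v, 0 ≤ t → q (t • v) = t * q v) (hD : 0 ≤ D)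
    {n : ℕ} {x : Fin n → (Fin n → Bool) → E} (hx : IsPredictable x) {B : ℝ} (hB : 0 < B)
    (hxB : ∀ ε, ∑ i, q (x i ε) ^ 2 ≤ B ^ 2) : walkMean p 0 x ≤ 3 * D * B := by
  set r := 2 * B / √(n + 1) with hr_def
  have hr : 0 < r := by positivity
  have q_zero : q 0 = 0 := by simpa using hq_smul 0 0 le_rfl
  have hr₀ : q 0 ≤ r := q_zero.trans_le hr.le
  have hbdd (N : ℕ) (v : E) : BddAbove (range fun z : boundedWalks q r N => walkMean p v z.1) :=
    ⟨_, forall_mem_range.2 fun z => h.walkMean_le hD hr.le v z.2⟩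
  calc walkMean p 0 x ≤ walkValue p q r (2 * n + 1) 0 :=
        walkMean_le_walkValue hr₀ hbdd hp hq_smul _ 0 hx (m := fun y => smallStepCount r (q y))
          (fun _ => Nat.succ_pos _) (fun y => le_mul_sqrt_smallStepCount hr (q y))
          fun ε => sum_smallStepCount_le hB (hxB ε)
    _ ≤ D * √((2 * n + 1 : ℕ) + 1) * max (q 0) r :=
        walkValue_le hr₀ fun z hz => h.walkMean_le hD hr.le 0 hz
    _ = D * (√2 * √(n + 1)) * r := by
        rw [max_eq_right hr₀, ← Real.sqrt_mul zero_le_two]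
        push_cast
        ring_nf
    _ = 2 * √2 * D * B := by rw [hr_def]; field_simp
    _ ≤ 3 * D * B := by
        gcongr
        nlinarith [Real.sq_sqrt (zero_le_two (α := ℝ)), Real.sqrt_nonneg 2]

theorem HasBoundedStepType.walkMean_le_of_sum_sq_le (h : HasBoundedStepType p q D)
    (hp : ConvexOn ℝ univ p) (hp_add : ∀ v w, p (v + w) ≤ p v + p w) (hq : ∀ v, 0 ≤ q v)
    (hq_smul : ∀ (t : ℝ) v, 0 ≤ t → q (t • v) = t * q v) (hD : 0 ≤ D)
    {n : ℕ} (x₀ : E) {x : Fin n → (Fin n → Bool) → E} (hx : IsPredictable x) {B : ℝ} (hB : 0 < B)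
    (hxB : ∀ ε, q x₀ ^ 2 + ∑ i, q (x i ε) ^ 2 ≤ B ^ 2) : walkMean p x₀ x ≤ 4 * D * B := by
  have q_x₀_le : q x₀ ≤ B := by
    refine (sq_le_sq₀ (hq x₀) hB.le).1 (le_of_add_le_of_nonneg_left (hxB fun _ => true) ?_)
    positivity
  have start_le : p x₀ ≤ D * B := (h.le_mul hq x₀).trans (by gcongr)
  have centred_le : walkMean p 0 x ≤ 3 * D * B :=
    h.walkMean_zero_le hp hq_smul hD hx hB
      fun ε => le_of_add_le_of_nonneg_right (hxB ε) (sq_nonneg _)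
  linarith [walkMean_le_add hp_add x₀ x]

theorem stmt10_general
    (hp : ConvexOn ℝ univ p) (hp_add : ∀ v w, p (v + w) ≤ p v + p w) (hq : ∀ v, 0 ≤ q v)
    (hq_smul : ∀ (t : ℝ) v, 0 ≤ t → q (t • v) = t * q v) (hD : 0 ≤ D)
    (h : HasBoundedStepType p q D) (n : ℕ) (x₀ : E)
    (x : Fin n → (Fin n → Bool) → E) (hx : IsPredictable x) :
    walkMean p x₀ x ≤ 4 * D * ⨆ ε, √(q x₀ ^ 2 + ∑ i, q (x i ε) ^ 2) := by
  set B := ⨆ ε, √(q x₀ ^ 2 + ∑ i, q (x i ε) ^ 2)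
  have B_nonneg : 0 ≤ B := Real.iSup_nonneg fun _ => Real.sqrt_nonneg _
  have le_of_gt : ∀ C > B, walkMean p x₀ x ≤ 4 * D * C := fun C hC =>
    have C_pos : 0 < C := B_nonneg.trans_lt hC
    h.walkMean_le_of_sum_sq_le hp hp_add hq hq_smul hD x₀ hx C_pos fun ε =>
      (Real.sqrt_le_left C_pos.le).1 ((le_ciSup (finite_range _).bddAbove ε).trans hC.le)
  have tendsto_bound : Tendsto (fun C => 4 * D * C) (𝓝[>] B) (𝓝 (4 * D * B)) :=
    ((continuous_const_mul (4 * D)).tendsto B).mono_left nhdsWithin_le_nhds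
  exact ge_of_tendsto tendsto_bound (eventually_nhdsWithin_of_forall le_of_gt)

end MartingaleType

section DualGauge

theorem convex_dualSet {d : ℕ} (C : Set (EuclideanSpace ℝ (Fin d))) : Convex ℝ (dualSet C) := by
  have : dualSet C = ⋂ y ∈ C, {x | ⟪x, y⟫ ≤ 1} := by ext; simp [dualSet]
  rw [this]
  exact convex_iInter₂ fun y _ => convex_halfSpace_le
    ⟨fun u w => inner_add_left u w y, fun t u => real_inner_smul_left u y t⟩ 1

theorem dualSet_mem_nhds_zero {d : ℕ} {C : Set (EuclideanSpace ℝ (Fin d))}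
    (hC : Bornology.IsBounded C) : dualSet C ∈ 𝓝 0 := by
  obtain ⟨R, R_pos, hR⟩ := hC.exists_pos_norm_le
  refine Metric.mem_nhds_iff.2 ⟨R⁻¹, by positivity, fun u hu y hy => ?_⟩
  rw [mem_ball_zero_iff] at hu
  calc ⟪u, y⟫ ≤ ‖u‖ * ‖y‖ := real_inner_le_norm u y
    _ ≤ R⁻¹ * R := by gcongr; exact hR y hy
    _ = 1 := inv_mul_cancel₀ R_pos.ne'

theorem convexOn_gauge {E : Type*} [AddCommGroup E] [Module ℝ E] {s : Set E} (hs : Convex ℝ s)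
    (absorbs : Absorbent ℝ s) : ConvexOn ℝ univ (gauge s) := by
  refine ⟨convex_univ, fun u _ w _ a b ha hb _ => (gauge_add_le hs absorbs _ _).trans_eq ?_⟩
  rw [gauge_smul_of_nonneg ha, gauge_smul_of_nonneg hb]

end DualGauge

/-- improving the martingale type for `p = 2`. There is a universal
constant `K` such that: whenever bounded symmetric convex bodies `𝒳, ℒ ⊆ ℝ^d` and `D > 0`
satisfy, for every predictable sequence,
`E‖x₀ + Σ εᵢ xᵢ(ε)‖_{𝒳^c} ≤ D√(n+1)·max(‖x₀‖_ℒ, maxᵢ max_ε ‖xᵢ(ε)‖_ℒ)`,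
then for every predictable sequence,
`E‖x₀ + Σ εᵢ xᵢ(ε)‖_{𝒳^c} ≤ K·D·max_ε (‖x₀‖_ℒ² + Σᵢ ‖xᵢ(ε)‖_ℒ²)^{1/2}`. -/
theorem stmt10 :
    ∃ K : ℝ, 0 < K ∧
      ∀ (d : ℕ) (𝒳 ℒ : Set (EuclideanSpace ℝ (Fin d))) (D : ℝ),
        Convex ℝ 𝒳 → (∀ x ∈ 𝒳, -x ∈ 𝒳) → Bornology.IsBounded 𝒳 →
          (0 : EuclideanSpace ℝ (Fin d)) ∈ interior 𝒳 →
        Convex ℝ ℒ → (∀ x ∈ ℒ, -x ∈ ℒ) → Bornology.IsBounded ℒ →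
          (0 : EuclideanSpace ℝ (Fin d)) ∈ interior ℒ →
        0 < D →
        (∀ (n : ℕ) (x₀ : EuclideanSpace ℝ (Fin d))
            (x : Fin n → (Fin n → Bool) → EuclideanSpace ℝ (Fin d)),
          (∀ (i : Fin n) (ε ε' : Fin n → Bool), (∀ j : Fin n, j < i → ε j = ε' j) →
            x i ε = x i ε') →
          (∑ ε : Fin n → Bool,
              gauge (dualSet 𝒳) (x₀ + ∑ i : Fin n, signv (ε i) • x i ε)) / 2 ^ n
            ≤ D * Real.sqrt (n + 1) *
                max (gauge ℒ x₀) (⨆ i : Fin n, ⨆ ε : Fin n → Bool, gauge ℒ (x i ε))) →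
        ∀ (n : ℕ) (x₀ : EuclideanSpace ℝ (Fin d))
            (x : Fin n → (Fin n → Bool) → EuclideanSpace ℝ (Fin d)),
          (∀ (i : Fin n) (ε ε' : Fin n → Bool), (∀ j : Fin n, j < i → ε j = ε' j) →
            x i ε = x i ε') →
          (∑ ε : Fin n → Bool,
              gauge (dualSet 𝒳) (x₀ + ∑ i : Fin n, signv (ε i) • x i ε)) / 2 ^ n
            ≤ K * D * ⨆ ε : Fin n → Bool,
                Real.sqrt (gauge ℒ x₀ ^ 2 + ∑ i : Fin n, gauge ℒ (x i ε) ^ 2) := by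
  refine ⟨4, four_pos, fun d 𝒳 ℒ D _ _ h𝒳 _ _ _ _ _ hD => ?_⟩
  have absorbs : Absorbent ℝ (dualSet 𝒳) := absorbent_nhds_zero (dualSet_mem_nhds_zero h𝒳)
  simp only [sum_div_two_pow_eq_expect]
  exact stmt10_general (convexOn_gauge (convex_dualSet 𝒳) absorbs)
    (gauge_add_le (convex_dualSet 𝒳) absorbs) gauge_nonneg
    (fun _ v ht => gauge_smul_of_nonneg ht v) hD.le
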